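/- arXiv:1404.0873 — 3 statements merged into one kernel-verified Lean document; each statement's English description precedes it below -/
import Mathlib

section
/- Let G be a group, N a normal subgroup of G, p a prime, and e, k positive integers; set m = ⌊log_p k⌋ (the largest nonnegative integer m with p^m ≤ k). Assume that the iterated commutator subgroup [N, _{k+1} G] is trivial and that [n^{p^e}, g] = 1 for all n ∈ N and g ∈ G. Then for every integer w with 2 ≤ w ≤ k+1 and all n ∈ N and g₂, …, g_w ∈ G, the left-normed commutator [n, g₂, …, g_w] has order dividing p^{e+m(k+1−w)}, i.e. [n, g₂, …, g_w]^{p^{e+m(k+1−w)}} = 1. (This is Lemma 2.5 of the paper, stated internally for the group G* with normal subgroup N*.) -/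
/-!
Write `L j = [N, _j G]`. The three subgroups lemma gives `[L i, L j] ≤ L (i + j + 1)`, and the
theorem follows from the stronger assertion that for `1 ≤ j ≤ k` every element of `L j` is killed
by `p ^ (e + m * (k - j))`, proved by descending induction on `j`.

The inductive step needs a form of the Hall-Petrescu collection formula: for `c ∈ L j`,
`(x * c) ^ n * x⁻¹ ^ n` is a product of powers `d i ^ n.choose i` with `d 1 = x * c * x⁻¹` and
`d i ∈ L (j + i - 1)`. It is obtained through polynomial sequences in the sense of Leibman:
sequences whose `r`-th difference takes values in `L (s + r)` for every `r`.
These are closed under products, inverses and commutators (`isPolySeq_closed`), the above sequence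
is one of them with `s = j - 1` (`isPolySeq_pow_mul`), and the factors `d i ^ n.choose i` can be
divided out one at a time, since a polynomial sequence equal to `1` at `0, …, r - 1` has its value
at `r` in `L (s + r)` (`IsPolySeq.apply_mem`). Put `n = p ^ E` with `E = e + m * (k - j)`. The
factors with `i > k + 1 - j` are trivial because `L (k + 1) = 1`; for `2 ≤ i ≤ k + 1 - j` the number
`(p ^ E).choose i` is divisible by `p ^ (E - m)`, which kills `L (j + 1)` by induction. So only the
factor for `i = 1` survives, and `(x * c) ^ p ^ E = x * c ^ p ^ E * x⁻¹ * x ^ p ^ E`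
(`pow_mul_eq`). Applied to two elements of `L j`, this shows that the elements killed by `p ^ E`
are closed under products; applied to `x ∈ L (j - 1)` and `c = [x, g]`, where `x * c` is a
conjugate of `x` and `x ^ p ^ E` is central, it shows that the generators of `L j` are killed.
-/

/-- The iterated commutator subgroup `[N, _k G]`. -/
def iterCommG {G : Type*} [Group G] (N : Subgroup G) : ℕ → Subgroup G
  | 0 => N
  | k + 1 => ⁅iterCommG N k, (⊤ : Subgroup G)⁆

/-- `𝕌_i(H)`: the subgroup generated by all `p^i`-th powers of elements of `H`. -/
def pPow {G : Type*} [Group G] (p i : ℕ) (H : Subgroup G) : Subgroup G :=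
  Subgroup.closure {x | ∃ h ∈ H, x = h ^ p ^ i}

/-- A relative central extension of the pair `(G, N)`. -/
structure RelCentralExt {M G : Type*} [Group M] [Group G] (σ : M →* G) (N : Subgroup G) where
  /-- the action of `G` on `M`, written `m ↦ m^g` in the paper -/
  act : M → G → M
  act_mul : ∀ m n g, act (m * n) g = act m g * act n g
  act_one : ∀ m, act m 1 = m
  act_act : ∀ m g h, act (act m g) h = act m (g * h)
  range_eq : σ.range = N
  sigma_act : ∀ m g, σ (act m g) = g⁻¹ * σ m * g
  act_sigma : ∀ m m₁, act m (σ m₁) = m₁⁻¹ * m * m₁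
  ker_act : ∀ a ∈ σ.ker, ∀ g : G, act a g = a

namespace RelCentralExt

variable {M G : Type*} [Group M] [Group G] {σ : M →* G} {N : Subgroup G}

/-- The `G`-commutator `[m, g] = m⁻¹ · m^g`. -/
def cmt (E : RelCentralExt σ N) (m : M) (g : G) : M := m⁻¹ * E.act m g

/-- The subgroup `[M', G]` generated by all `G`-commutators `[m, g]`, `m ∈ M'`, `g ∈ G`. -/
def commSub (E : RelCentralExt σ N) (M' : Subgroup M) : Subgroup M :=
  Subgroup.closure {x | ∃ m ∈ M', ∃ g : G, x = E.cmt m g}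

/-- The iterated subgroup `[M', _n G]`. -/
def iterComm (E : RelCentralExt σ N) (M' : Subgroup M) : ℕ → Subgroup M
  | 0 => M'
  | n + 1 => E.commSub (E.iterComm M' n)

end RelCentralExt

/-- The (paper-convention) commutator `[a, b] = a⁻¹ b⁻¹ a b`. -/
def pcmt {G : Type*} [Group G] (a b : G) : G := a⁻¹ * b⁻¹ * a * b

/-! ### Iterated commutator subgroups -/

open scoped commutatorElement

/-- The three subgroups lemma modulo a normal subgroup `K`. -/
theorem commutator_le_of_rotate {G : Type*} [Group G] (A B C K : Subgroup G) [K.Normal]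
    (h1 : ⁅⁅B, C⁆, A⁆ ≤ K) (h2 : ⁅⁅C, A⁆, B⁆ ≤ K) : ⁅⁅A, B⁆, C⁆ ≤ K := by
  have key : ∀ X : Subgroup G, X ≤ K ↔ X.map (QuotientGroup.mk' K) = ⊥ := by
    intro X
    rw [Subgroup.map_eq_bot_iff, QuotientGroup.ker_mk']
  rw [key] at h1 h2 ⊢
  simp only [Subgroup.map_commutator] at h1 h2 ⊢
  exact Subgroup.commutator_commutator_eq_bot_of_rotate h1 h2

theorem iterCommG_normal {G : Type*} [Group G] {N : Subgroup G} (hN : N.Normal) :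
    ∀ j, (iterCommG N j).Normal
  | 0 => hN
  | j + 1 => by
    have := iterCommG_normal hN j
    exact Subgroup.commutator_normal _ _

theorem iterCommG_antitone {G : Type*} [Group G] {N : Subgroup G} (hN : N.Normal) :
    Antitone (iterCommG N) := by
  refine antitone_nat_of_succ_le fun j => ?_
  have := iterCommG_normal hN j
  exact Subgroup.commutator_le_left _ _

theorem iterCommG_commutator_le {G : Type*} [Group G] {N : Subgroup G} (hN : N.Normal) (j : ℕ) :
    ∀ i, ⁅iterCommG N i, iterCommG N j⁆ ≤ iterCommG N (i + j + 1) := by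
  induction j with
  | zero => exact fun i => Subgroup.commutator_mono le_rfl le_top
  | succ j ih =>
    intro i
    have := iterCommG_normal hN (i + (j + 1) + 1)
    rw [Subgroup.commutator_comm]
    refine commutator_le_of_rotate (iterCommG N j) ⊤ (iterCommG N i) _ ?_ ?_
    · rw [Subgroup.commutator_comm ⊤]
      have h := ih (i + 1)
      rwa [show i + 1 + j + 1 = i + (j + 1) + 1 by ring] at h
    · exact Subgroup.commutator_mono (ih i) le_rfl

/-! ### Polynomial sequences -/

/-- Sequences that are polynomial of shift `s` with respect to the filtration `L`, tested up to
order `d`: for every `r ≤ d` the `r`-th difference takes values in `L (s + r)`. The difference of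
`f` is `n ↦ (f n)⁻¹ * f (n + 1)`. Truncating at order `d` makes it possible to prove closure
properties by induction on `d`. -/
def IsPolySeq {G : Type*} [Group G] (L : ℕ → Subgroup G) : ℕ → ℕ → (ℕ → G) → Prop
  | 0, s, f => ∀ n, f n ∈ L s
  | d + 1, s, f => (∀ n, f n ∈ L s) ∧ IsPolySeq L d (s + 1) fun n => (f n)⁻¹ * f (n + 1)

section

variable {G : Type*} [Group G] {L : ℕ → Subgroup G}

theorem IsPolySeq.mem {d s : ℕ} {f : ℕ → G} (h : IsPolySeq L d s f) (n : ℕ) : f n ∈ L s := by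
  cases d with
  | zero => exact h n
  | succ d => exact h.1 n

theorem IsPolySeq.lower {d : ℕ} :
    ∀ {s : ℕ} {f : ℕ → G}, IsPolySeq L (d + 1) s f → IsPolySeq L d s f := by
  induction d with
  | zero => exact fun h => h.1
  | succ d ih => exact fun h => ⟨h.1, ih h.2⟩

theorem IsPolySeq.mono (hL : Antitone L) {d : ℕ} :
    ∀ {s t : ℕ} {f : ℕ → G}, s ≤ t → IsPolySeq L d t f → IsPolySeq L d s f := by
  induction d with
  | zero => exact fun hst h n => hL hst (h n)
  | succ d ih => exact fun hst h => ⟨fun n => hL hst (h.1 n), ih (by omega) h.2⟩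

/-- Polynomial sequences are closed under products, inverses and commutators. The three properties
are proved together because the difference of each of these sequences is a product of sequences of
all three kinds, of one order less. -/
theorem isPolySeq_closed (hL : Antitone L) (hc : ∀ i j, ⁅L i, L j⁆ ≤ L (i + j + 1)) (d : ℕ) :
    (∀ s (f g : ℕ → G), IsPolySeq L d s f → IsPolySeq L d s g → IsPolySeq L d s (f * g)) ∧
    (∀ s (f : ℕ → G), IsPolySeq L d s f → IsPolySeq L d s f⁻¹) ∧
    (∀ s t (f g : ℕ → G), IsPolySeq L d s f → IsPolySeq L d t g →
      IsPolySeq L d (s + t + 1) ⁅f, g⁆) := by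
  induction d with
  | zero =>
    exact ⟨fun s f g hf hg n => (L s).mul_mem (hf n) (hg n), fun s f hf n => (L s).inv_mem (hf n),
      fun s t f g hf hg n => hc s t (Subgroup.commutator_mem_commutator (hf n) (hg n))⟩
  | succ d ih =>
    obtain ⟨hm, hi, hk⟩ := ih
    have hconj : ∀ s t (f g : ℕ → G), IsPolySeq L d s f → IsPolySeq L d t g →
        IsPolySeq L d s (g * f * g⁻¹) := by
      intro s t f g hf hg
      have : g * f * g⁻¹ = ⁅g, f⁆ * f := by simp [commutatorElement_def]
      rw [this]
      exact hm _ _ _ ((hk _ _ _ _ hg hf).mono hL (by omega)) hf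
    refine ⟨fun s f g hf hg => ?_, fun s f hf => ?_, fun s t f g hf hg => ?_⟩
    · refine ⟨fun n => (L s).mul_mem (hf.1 n) (hg.1 n), ?_⟩
      have := hm _ _ _ (hconj _ _ _ _ hf.2 (hi _ _ hg.lower)) hg.2
      convert this using 1
      funext n
      simp only [Pi.mul_apply, Pi.inv_apply]
      group
    · refine ⟨fun n => (L s).inv_mem (hf.1 n), ?_⟩
      have := hconj _ _ _ _ (hi _ _ hf.2) hf.lower
      convert this using 1
      funext n
      simp only [Pi.mul_apply, Pi.inv_apply]
      group
    · refine ⟨fun n => hc s t (Subgroup.commutator_mem_commutator (hf.1 n) (hg.1 n)), ?_⟩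
      have hab := (hk _ _ _ _ hf.2 hg.2).mono hL (show s + t + 1 + 1 ≤ _ by omega)
      have hag := (hk _ _ _ _ hf.2 hg.lower).mono hL (show s + t + 1 + 1 ≤ _ by omega)
      have hfb := (hk _ _ _ _ hf.lower hg.2).mono hL (show s + t + 1 + 1 ≤ _ by omega)
      -- With `a`, `b` the differences of `f`, `g`, the commutator `⁅f * a, g * b⁆` equals
      -- `f X f⁻¹ * ⁅f, g⁆ * g ⁅f, b⁆ g⁻¹` where `X = ⁅a, g⁆ * g ⁅a, b⁆ g⁻¹`.
      have hX := hm _ _ _ hag (hconj _ _ _ _ hab hg.lower)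
      have h1 := hconj _ _ _ _ (hconj _ _ _ _ hX hf.lower)
        (hi _ _ (hk _ _ _ _ hf.lower hg.lower))
      have := hm _ _ _ h1 (hconj _ _ _ _ hfb hg.lower)
      convert this using 1
      funext n
      simp only [Pi.mul_apply, Pi.inv_apply, commutatorElement_def]
      group

theorem IsPolySeq.const_one (d : ℕ) : ∀ s, IsPolySeq L d s fun _ => (1 : G) := by
  induction d with
  | zero => exact fun s n => (L s).one_mem
  | succ d ih => exact fun s => ⟨fun n => (L s).one_mem, by simpa using ih (s + 1)⟩

theorem isPolySeq_pow_choose (hL : Antitone L) (d : ℕ) :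
    ∀ (s r : ℕ) (y : G), y ∈ L (s + r) → IsPolySeq L d s fun n => y ^ n.choose r := by
  induction d with
  | zero => exact fun s r y hy n => (L s).pow_mem (hL (by omega) hy) _
  | succ d ih =>
    intro s r y hy
    refine ⟨fun n => (L s).pow_mem (hL (by omega) hy) _, ?_⟩
    cases r with
    | zero => simpa using IsPolySeq.const_one d (s + 1)
    | succ r =>
      have := ih (s + 1) r y (by rwa [show s + 1 + r = s + (r + 1) by ring])
      convert this using 1
      funext n
      simp only [Nat.choose_succ_succ', add_comm (n.choose r)]
      rw [pow_add, inv_mul_cancel_left]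

theorem isPolySeq_conj (hn : ∀ i, (L i).Normal) (hc : ∀ i, ⁅L i, ⊤⁆ ≤ L (i + 1)) (x : G) (d : ℕ) :
    ∀ (s : ℕ) (c : G), c ∈ L s → IsPolySeq L d s fun n => x ^ n * c * (x ^ n)⁻¹ := by
  induction d with
  | zero => exact fun s c h n => (hn s).conj_mem _ h _
  | succ d ih =>
    intro s c h
    refine ⟨fun n => (hn s).conj_mem _ h _, ?_⟩
    have := ih (s + 1) ⁅c⁻¹, x⁆
      (hc s (Subgroup.commutator_mem_commutator ((L s).inv_mem h) trivial))
    convert this using 1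
    funext n
    simp only [commutatorElement_def, pow_succ]
    group

theorem isPolySeq_pow_mul (hL : Antitone L) (hn : ∀ i, (L i).Normal)
    (hc : ∀ i, ⁅L i, ⊤⁆ ≤ L (i + 1)) (x c : G) (s : ℕ) (h : c ∈ L (s + 1)) (d : ℕ) :
    IsPolySeq L d s fun n => (x * c) ^ n * (x ^ n)⁻¹ := by
  have hmem : ∀ n, (x * c) ^ n * (x ^ n)⁻¹ ∈ L s := by
    intro n
    induction n with
    | zero => simp
    | succ n ih =>
      have e : (x * c) ^ (n + 1) * (x ^ (n + 1))⁻¹ =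
          (x * c) ^ n * (x ^ n)⁻¹ * (x ^ (n + 1) * c * (x ^ (n + 1))⁻¹) := by
        simp only [pow_succ]
        group
      rw [e]
      exact (L s).mul_mem ih ((hn s).conj_mem _ (hL (Nat.le_succ s) h) _)
  cases d with
  | zero => exact hmem
  | succ d =>
    refine ⟨hmem, ?_⟩
    have := isPolySeq_conj hn hc x d (s + 1) (x * c * x⁻¹) ((hn _).conj_mem _ h _)
    convert this using 1
    funext n
    simp only [pow_succ]
    group

/-- The value at `r` of a sequence equal to `1` at `0, …, r - 1` is its `r`-th difference at `0`. -/
theorem IsPolySeq.apply_mem (r : ℕ) :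
    ∀ {s : ℕ} {f : ℕ → G}, IsPolySeq L r s f → (∀ i < r, f i = 1) →
    f r ∈ L (s + r) := by
  induction r with
  | zero => exact fun h _ => h 0
  | succ r ih =>
    intro s f h h0
    have := ih h.2 (fun i hi => by simp [h0 i (by omega), h0 (i + 1) (by omega)])
    simpa [h0 r (by omega), show s + 1 + r = s + (r + 1) by ring] using this

/-- A polynomial sequence equal to `1` at `0, …, r - 1` is a product of the sequences
`y ^ n.choose i` with `i ≥ r` and `y ∈ L (s + i)`, hence equals `1` at `n = q` as soon as
all these factors do. The filtration ends at `L (k + 1) = ⊥`. -/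
theorem IsPolySeq.eq_one (hL : Antitone L) (hc : ∀ i j, ⁅L i, L j⁆ ≤ L (i + j + 1)) {k s q : ℕ}
    (hk : L (k + 1) = ⊥) {r₀ : ℕ}
    (hq : ∀ r, r₀ ≤ r → s + r ≤ k → ∀ y ∈ L (s + r), y ^ q.choose r = 1) (t : ℕ) :
    ∀ r, r₀ ≤ r → k + 1 ≤ s + r + t → ∀ f : ℕ → G, (∀ d, IsPolySeq L d s f) → (∀ i < r, f i = 1) →
      f q = 1 := by
  induction t with
  | zero =>
    intro r _ hr f hf h0
    have : ∀ n, f n = 1 := by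
      intro n
      induction n using Nat.strong_induction_on with
      | _ n ih =>
        by_cases hnr : n < r
        · exact h0 n hnr
        · have h1 := hL (show k + 1 ≤ s + n by omega) ((hf n).apply_mem n ih)
          rwa [hk, Subgroup.mem_bot] at h1
    exact this q
  | succ t ih =>
    intro r hr₀ hr f hf h0
    have hy := (hf r).apply_mem r h0
    -- Divide out the factor `f r ^ n.choose r`.
    have h1 := ih (r + 1) (by omega) (by omega) ((fun n => f r ^ n.choose r)⁻¹ * f)
      (fun d => (isPolySeq_closed hL hc d).1 _ _ _
        ((isPolySeq_closed hL hc d).2.1 _ _ (isPolySeq_pow_choose hL d s r _ hy)) (hf d)) (by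
        intro i hi
        rcases Nat.lt_succ_iff_lt_or_eq.1 hi with hi | rfl
        · simp [h0 i hi, Nat.choose_eq_zero_of_lt hi]
        · simp)
    simp only [Pi.mul_apply, Pi.inv_apply, inv_mul_eq_one] at h1
    rw [← h1]
    by_cases hs : s + r ≤ k
    · exact hq r hr₀ hs _ hy
    · have h2 := hL (show k + 1 ≤ s + r by omega) hy
      rw [hk, Subgroup.mem_bot] at h2
      simp [h2]

/-- The consequence of the collection formula: when the factors with `i ≥ 2` are trivial at `q`,
only the linear term survives. -/
theorem pow_mul_eq (hL : Antitone L) (hn : ∀ i, (L i).Normal)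
    (hc : ∀ i j, ⁅L i, L j⁆ ≤ L (i + j + 1)) (hc' : ∀ i, ⁅L i, ⊤⁆ ≤ L (i + 1)) {k s q : ℕ}
    (hk : L (k + 1) = ⊥)
    (hq : ∀ r, 2 ≤ r → s + r ≤ k → ∀ y ∈ L (s + r), y ^ q.choose r = 1)
    {x c : G} (h : c ∈ L (s + 1)) : (x * c) ^ q = x * c ^ q * x⁻¹ * x ^ q := by
  have hy : x * c * x⁻¹ ∈ L (s + 1) := (hn _).conj_mem _ h _
  have h1 := IsPolySeq.eq_one hL hc hk hq (k + 1) 2 le_rfl (by omega)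
    ((fun n => (x * c * x⁻¹) ^ n.choose 1)⁻¹ * fun n => (x * c) ^ n * (x ^ n)⁻¹)
    (fun d => (isPolySeq_closed hL hc d).1 _ _ _
      ((isPolySeq_closed hL hc d).2.1 _ _ (isPolySeq_pow_choose hL d s 1 _ hy))
      (isPolySeq_pow_mul hL hn hc' x c s h d)) (by
      intro i hi
      interval_cases i <;> simp [mul_assoc])
  simp only [Pi.mul_apply, Pi.inv_apply, inv_mul_eq_one, Nat.choose_one_right, conj_pow] at h1
  rw [h1]
  group

end

/-! ### Exponents -/

/-- `p ^ (a + m) ∣ r * (p ^ (a + m)).choose r`, and the `p`-part of `r ≤ k` is at most `p ^ m`. -/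
theorem pow_dvd_choose {p : ℕ} (hp : p.Prime) {k m a r : ℕ} (hm : ∀ m' : ℕ, p ^ m' ≤ k → m' ≤ m)
    (hr0 : 0 < r) (hrk : r ≤ k) : p ^ a ∣ (p ^ (a + m)).choose r := by
  obtain ⟨v, r', hr', rfl⟩ := Nat.exists_eq_pow_mul_and_not_dvd hr0.ne' p hp.ne_one
  have hv : v ≤ m := by
    refine hm v (le_trans (Nat.le_of_dvd hr0 (Dvd.intro _ rfl)) hrk)
  obtain ⟨r, hr⟩ : ∃ r, p ^ v * r' = r + 1 := ⟨_, (Nat.succ_pred_eq_of_pos hr0).symm⟩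
  obtain ⟨n, hn⟩ : ∃ n, p ^ (a + m) = n + 1 :=
    ⟨_, (Nat.succ_pred_eq_of_pos (pow_pos hp.pos _)).symm⟩
  have h := Nat.add_one_mul_choose_eq n r
  rw [← hn, ← hr] at h
  have h1 : p ^ (a + v) ∣ p ^ v * (r' * (p ^ (a + m)).choose (p ^ v * r')) := by
    refine (pow_dvd_pow p (show a + v ≤ a + m by omega)).trans ?_
    refine (Dvd.intro _ h).trans (dvd_of_eq (by ring))
  rw [add_comm, pow_add] at h1
  exact (((Nat.Prime.coprime_iff_not_dvd hp).2 hr').pow_left a).dvd_of_dvd_mul_left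
    (Nat.dvd_of_mul_dvd_mul_left (pow_pos hp.pos v) h1)

/-- The inductive step: the elements of `[N, _{j+1} G]` killed by `q` are closed under products and
contain the generating commutators. -/
theorem iterCommG_pow_step {G : Type*} [Group G] {N : Subgroup G} (hN : N.Normal)
    {q j k : ℕ} (h1 : iterCommG N (k + 1) = ⊥) (h2 : ∀ n ∈ N, ∀ g : G, Commute g (n ^ q))
    (hq : ∀ r, 2 ≤ r → j + r ≤ k → ∀ y ∈ iterCommG N (j + r), y ^ q.choose r = 1) :
    ∀ y ∈ iterCommG N (j + 1), y ^ q = 1 := by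
  have hL := iterCommG_antitone hN
  have hmul : ∀ {x c : G}, c ∈ iterCommG N (j + 1) →
      (x * c) ^ q = x * c ^ q * x⁻¹ * x ^ q := fun {x c} hc =>
    pow_mul_eq hL (iterCommG_normal hN) (fun i j => iterCommG_commutator_le hN j i)
      (fun i => le_rfl) h1 hq hc
  intro y hy
  have hy' : y ∈ Subgroup.closure
      {z | ∃ x ∈ iterCommG N j, ∃ g ∈ (⊤ : Subgroup G), ⁅x, g⁆ = z} := hy
  induction hy' using Subgroup.closure_induction with
  | mem z hz =>
    obtain ⟨x, hx, g, -, rfl⟩ := hz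
    -- `x⁻¹ * ⁅x, g⁆` is the conjugate of `x⁻¹` by `g`, so both have the same `q`-th power.
    have h := hmul (x := x⁻¹) hy
    have e : x⁻¹ * ⁅x, g⁆ = g * x⁻¹ * g⁻¹ := by
      simp only [commutatorElement_def]
      group
    have hc := (h2 x⁻¹ (N.inv_mem (hL (Nat.zero_le j) hx)) g).eq
    rw [e, conj_pow, hc, mul_inv_cancel_right, inv_inv, right_eq_mul] at h
    simpa [mul_assoc, inv_mul_eq_one] using h
  | one => exact one_pow _
  | mul a b ha hb iha ihb =>
    rw [hmul hb, ihb hb, iha ha]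
    simp
  | inv a ha iha => rw [inv_pow, iha ha, inv_one]

theorem iterCommG_pow {G : Type*} [Group G] {N : Subgroup G} (hN : N.Normal)
    {p e k m : ℕ} (hp : p.Prime) (hm : ∀ m' : ℕ, p ^ m' ≤ k → m' ≤ m)
    (h1 : iterCommG N (k + 1) = ⊥) (h2 : ∀ n ∈ N, ∀ g : G, Commute g (n ^ p ^ e)) (i : ℕ) :
    ∀ j, j + 1 + i = k → ∀ y ∈ iterCommG N (j + 1), y ^ p ^ (e + m * i) = 1 := by
  have h2' : ∀ i, ∀ n ∈ N, ∀ g : G, Commute g (n ^ p ^ (e + m * i)) := by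
    intro i n hn g
    rw [pow_add, pow_mul]
    exact (h2 n hn g).pow_right _
  induction i with
  | zero => exact fun j hj => iterCommG_pow_step hN h1 (h2' _) fun r h h' => by omega
  | succ i ih =>
    refine fun j hj => iterCommG_pow_step hN h1 (h2' _) fun r h h' y hy => ?_
    obtain ⟨t, ht⟩ := pow_dvd_choose hp (a := e + m * i) hm (show 0 < r by omega)
      (show r ≤ k by omega)
    rw [show e + m * (i + 1) = e + m * i + m by ring, ht, pow_mul,
      ih (j + 1) (by omega) y (iterCommG_antitone hN (by omega) hy), one_pow]

theorem foldl_pcmt_mem {G : Type*} [Group G] (N : Subgroup G) (gs : List G) :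
    ∀ (j : ℕ) (n : G), n ∈ iterCommG N j → gs.foldl pcmt n ∈ iterCommG N (j + gs.length) := by
  induction gs with
  | nil => exact fun j n h => h
  | cons g gs ih =>
    intro j n h
    have hg : pcmt n g = ⁅n⁻¹, g⁻¹⁆ := by simp [pcmt, commutatorElement_def]
    have := ih (j + 1) (pcmt n g) (hg ▸
      Subgroup.commutator_mem_commutator ((iterCommG N j).inv_mem h) trivial)
    rwa [List.foldl_cons, List.length_cons, show j + (gs.length + 1) = j + 1 + gs.length by ring]

/-- Lemma 2.5: if `(G, N)` satisfies `[N, _{k+1} G] = 1` and `[n^{p^e}, g] = 1` for all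
`n ∈ N`, `g ∈ G`, then for `2 ≤ w ≤ k + 1` every left-normed commutator
`[n, g₂, …, g_w]` (`n ∈ N`, `gᵢ ∈ G`) has order dividing `p^{e + m(k+1-w)}`,
where `m = ⌊log_p k⌋`. -/
theorem stmt_1 {G : Type*} [Group G] (N : Subgroup G) (hN : N.Normal)
    (p e k : ℕ) (hp : p.Prime) (he : 0 < e) (hk : 0 < k)
    (m : ℕ) (hm₁ : p ^ m ≤ k) (hm₂ : ∀ m' : ℕ, p ^ m' ≤ k → m' ≤ m)
    (h1 : iterCommG N (k + 1) = ⊥)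
    (h2 : ∀ n ∈ N, ∀ g : G, pcmt (n ^ p ^ e) g = 1) :
    ∀ w : ℕ, 2 ≤ w → w ≤ k + 1 → ∀ n ∈ N, ∀ gs : List G, gs.length = w - 1 →
      (gs.foldl pcmt n) ^ p ^ (e + m * (k + 1 - w)) = 1 := by
  intro w hw hwk n hn gs hgs
  have hmem := foldl_pcmt_mem N gs 0 n hn
  have hcomm : ∀ n ∈ N, ∀ g : G, Commute g (n ^ p ^ e) := by
    intro n hn g
    have h := h2 n hn g
    rwa [pcmt, mul_assoc, ← mul_inv_rev, inv_mul_eq_one] at h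
  rw [hgs, show 0 + (w - 1) = w - 2 + 1 by omega] at hmem
  exact iterCommG_pow hN hp hm₂ h1 hcomm (k + 1 - w) (w - 2) (by omega) _ hmem
end

section
/- Let p be a prime and let (G,N) be a pair of finite p-groups of class at most p−1, i.e. [N, _{p−1} G] = 1, where N has exponent p^e, and suppose N admits a complement K in G (N ∩ K = 1 and NK = G). Let σ : N* → G be a relative central extension of (G,N) whose kernel satisfies ker σ ≤ [N*, G]. Then every element of ker σ has order dividing p^e = exp(N). (This is the content of Corollary 2.9 of the paper: ker σ of a covering pair is isomorphic to the Schur multiplier M(G,N), so exp(M(G,N)) divides exp(N).) -/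
open scoped commutatorElement

/-! ### Filtrations and polynomial sequences -/

/-- A decreasing filtration of (a subgroup of) `P` with `[F i, F j] ≤ F (i + j)`. It is not
required that `F 0` be the whole group, so filtrations of subgroups of `P` are included. -/
structure IsFilt {P : Type*} [Group P] (F : ℕ → Subgroup P) : Prop where
  anti : Antitone F
  comm : ∀ {i j a b}, a ∈ F i → b ∈ F j → ⁅a, b⁆ ∈ F (i + j)

/-- The discrete derivative `n ↦ (g n)⁻¹ g (n + 1)` of a sequence in a group. -/
def seqD {P : Type*} [Group P] (g : ℕ → P) : ℕ → P := fun n => (g n)⁻¹ * g (n + 1)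

/-- Polynomial sequences of level `t` for the filtration `F`: the `i`-th derivatives take values in
`F (t + i)`. Derivatives of the inverse sequence are controlled at every stage too, which makes the
notion invariant under inversion by definition; the constructor `one` terminates the recursion. -/
inductive IsPolySeq_s4 {P : Type*} [Group P] (F : ℕ → Subgroup P) : ℕ → (ℕ → P) → Prop
  | one (t : ℕ) : IsPolySeq_s4 F t 1
  | step (t : ℕ) (g : ℕ → P) : (∀ n, g n ∈ F t) → IsPolySeq_s4 F (t + 1) (seqD g) →
      IsPolySeq_s4 F (t + 1) (seqD g⁻¹) → IsPolySeq_s4 F t g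

section Poly

variable {P : Type*} [Group P] {F : ℕ → Subgroup P}

theorem seqD_one : seqD (1 : ℕ → P) = 1 := by
  funext n; simp [seqD]

theorem IsPolySeq_s4.mem {t : ℕ} {g : ℕ → P} (h : IsPolySeq_s4 F t g) (n : ℕ) : g n ∈ F t := by
  cases h with
  | one => exact one_mem _
  | step _ _ h => exact h n

theorem IsPolySeq_s4.deriv {t : ℕ} {g : ℕ → P} (h : IsPolySeq_s4 F t g) :
    IsPolySeq_s4 F (t + 1) (seqD g) := by
  cases h with
  | one => rw [seqD_one]; exact .one _
  | step _ _ _ h => exact h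

theorem IsPolySeq_s4.inv {t : ℕ} {g : ℕ → P} (h : IsPolySeq_s4 F t g) : IsPolySeq_s4 F t g⁻¹ := by
  cases h with
  | one => rw [inv_one]; exact .one _
  | step _ _ h0 h1 h2 =>
    exact .step _ _ (fun n => inv_mem (h0 n)) h2 (by rwa [inv_inv])

theorem IsPolySeq_s4.of_succ (hF : IsFilt F) {t : ℕ} {g : ℕ → P} (h : IsPolySeq_s4 F (t + 1) g) :
    IsPolySeq_s4 F t g := by
  generalize hs : t + 1 = s at h
  induction h generalizing t with
  | one => exact .one _
  | step s g h0 _ _ ih1 ih2 =>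
    subst hs
    exact .step _ _ (fun n => hF.anti (Nat.le_succ t) (h0 n)) (ih1 rfl) (ih2 rfl)

theorem IsPolySeq_s4.of_le (hF : IsFilt F) {s t : ℕ} (hst : s ≤ t) {g : ℕ → P}
    (h : IsPolySeq_s4 F t g) : IsPolySeq_s4 F s g := by
  induction hst with
  | refl => exact h
  | step _ ih => exact ih (h.of_succ hF)

theorem isPolySeq_of_bot {t : ℕ} (ht : F t = ⊥) {g : ℕ → P} (h : ∀ n, g n ∈ F t) :
    IsPolySeq_s4 F t g := by
  have : g = 1 := by
    funext n
    have := h n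
    rwa [ht, Subgroup.mem_bot] at this
  rw [this]
  exact .one _

/-- Lazard–Leibman: above any level `k`, polynomial sequences are closed under products, and the
commutator of sequences of levels `s` and `t` has level `s + t`. The proof is a descending induction
on `k`, based on the Leibniz-type rules for the derivatives of a product and of a commutator. -/
theorem IsFilt.isPolySeq_aux (hF : IsFilt F) {C : ℕ} (hC : F C = ⊥) (d k : ℕ) (hk : C ≤ k + d) :
    (∀ u, k ≤ u → ∀ g h, IsPolySeq_s4 F u g → IsPolySeq_s4 F u h → IsPolySeq_s4 F u (g * h)) ∧
    (∀ s t, k ≤ s + t → ∀ g h, IsPolySeq_s4 F s g → IsPolySeq_s4 F t h →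
      IsPolySeq_s4 F (s + t) ⁅g, h⁆) := by
  induction d generalizing k with
  | zero =>
    have hb : ∀ u, k ≤ u → F u = ⊥ := fun u hu =>
      le_bot_iff.1 (hC ▸ hF.anti (by omega : C ≤ u))
    exact ⟨fun u hu g h hg hh => isPolySeq_of_bot (hb u hu) fun n => mul_mem (hg.mem n) (hh.mem n),
      fun s t hst g h hg hh => isPolySeq_of_bot (hb _ hst) fun n => hF.comm (hg.mem n) (hh.mem n)⟩
  | succ d ih =>
    obtain ⟨A, B⟩ := ih (k + 1) (by omega)
    have conj : ∀ {s w}, k + 1 ≤ w → ∀ {g u : ℕ → P}, IsPolySeq_s4 F s g → IsPolySeq_s4 F w u →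
        IsPolySeq_s4 F w (g * u * g⁻¹) := by
      intro s w hw g u hg hu
      have h1 := (B s w (by omega) g u hg hu).of_le hF (Nat.le_add_left w s)
      have h2 := A w hw _ _ h1 hu
      rwa [show ⁅g, u⁆ * u = g * u * g⁻¹ by rw [commutatorElement_def]; group] at h2
    have dmul : ∀ {u}, k ≤ u → ∀ {g h : ℕ → P}, IsPolySeq_s4 F u g → IsPolySeq_s4 F u h →
        IsPolySeq_s4 F (u + 1) (seqD (g * h)) := by
      intro u hu g h hg hh
      have h1 := A (u + 1) (by omega) _ _ (conj (by omega) hh.inv hg.deriv) hh.deriv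
      rwa [show h⁻¹ * seqD g * h⁻¹⁻¹ * seqD h = seqD (g * h) by
        funext n; simp only [seqD, Pi.mul_apply, Pi.inv_apply]; group] at h1
    have dcomm : ∀ {s t}, k ≤ s + t → ∀ {g h : ℕ → P}, IsPolySeq_s4 F s g → IsPolySeq_s4 F t h →
        IsPolySeq_s4 F (s + t + 1) (seqD ⁅g, h⁆) := by
      intro s t hst g h hg hh
      have hw : k + 1 ≤ s + t + 1 := by omega
      have c1 : IsPolySeq_s4 F (s + t + 1) ⁅seqD g, h⁆ := by
        have := B (s + 1) t (by omega) _ _ hg.deriv hh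
        rwa [show s + 1 + t = s + t + 1 by omega] at this
      have c2 : IsPolySeq_s4 F (s + t + 1) ⁅g, seqD h⁆ := B s (t + 1) (by omega) _ _ hg hh.deriv
      have c3 : IsPolySeq_s4 F (s + t + 1) ⁅seqD g, seqD h⁆ :=
        (B (s + 1) (t + 1) (by omega) _ _ hg.deriv hh.deriv).of_le hF (by omega)
      -- `v = g ⁅γ, h η⁆ g⁻¹`, where `γ`, `η` are the derivatives of `g`, `h`
      have v := conj hw hg (A _ hw _ _ c1 (conj hw hh c3))
      have v' := conj hw hh (conj hw hg (conj hw hh.inv (conj hw hg.inv v)))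
      have r := A _ hw _ _ v' (conj hw hh c2)
      refine (congrArg (IsPolySeq_s4 F (s + t + 1)) ?_).mp r
      funext n
      simp only [seqD, Pi.mul_apply, Pi.inv_apply, commutatorElement_def]
      group
    refine ⟨fun u hu g h hg hh => .step _ _ (fun n => mul_mem (hg.mem n) (hh.mem n))
      (dmul hu hg hh) ?_, fun s t hst g h hg hh => .step _ _ (fun n => hF.comm (hg.mem n) (hh.mem n))
      (dcomm hst hg hh) ?_⟩
    · rw [mul_inv_rev]
      exact dmul hu hh.inv hg.inv
    · rw [commutatorElement_inv, Nat.add_comm s t]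
      exact dcomm (by omega) hh hg

theorem IsFilt.isPolySeq_mul (hF : IsFilt F) {C : ℕ} (hC : F C = ⊥) {t : ℕ} {g h : ℕ → P}
    (hg : IsPolySeq_s4 F t g) (hh : IsPolySeq_s4 F t h) : IsPolySeq_s4 F t (g * h) :=
  (hF.isPolySeq_aux hC C 0 (by omega)).1 t (Nat.zero_le _) g h hg hh

theorem IsFilt.isPolySeq_choose (hF : IsFilt F) (j t : ℕ) (a : P) (ha : a ∈ F (t + j)) :
    IsPolySeq_s4 F t (fun n => a ^ n.choose j) := by
  induction j generalizing t a with
  | zero =>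
    have h1 : ∀ b : P, seqD (fun _ : ℕ => b) = 1 := fun b => by funext n; simp [seqD]
    simp only [Nat.choose_zero_right, pow_one]
    refine .step _ _ (fun _ => ha) ?_ ?_
    · rw [h1]; exact .one _
    · rw [show ((fun _ : ℕ => a)⁻¹ : ℕ → P) = fun _ => a⁻¹ from rfl, h1]; exact .one _
  | succ j ih =>
    have h1 : ∀ b : P, seqD (fun n : ℕ => b ^ n.choose (j + 1)) = fun n => b ^ n.choose j := by
      intro b
      funext n
      simp only [seqD]
      rw [Nat.choose_succ_succ', Nat.add_comm, pow_add]
      group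
    have ha' : a ∈ F (t + 1 + j) := by rwa [show t + 1 + j = t + (j + 1) by omega]
    refine .step _ _ (fun _ => pow_mem (hF.anti (by omega) ha) _) ?_ ?_
    · rw [h1]; exact ih _ _ ha'
    · rw [show ((fun n : ℕ => a ^ n.choose (j + 1))⁻¹ : ℕ → P) = fun n => a⁻¹ ^ n.choose (j + 1) by
        funext n; simp, h1]
      exact ih _ _ (inv_mem ha')

theorem IsPolySeq_s4.iterate_mem {t : ℕ} {g : ℕ → P} (h : IsPolySeq_s4 F t g) (i n : ℕ) :
    (seqD^[i] g) n ∈ F (t + i) := by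
  induction i generalizing t g with
  | zero => exact h.mem n
  | succ i ih =>
    have := ih h.deriv
    rwa [show t + 1 + i = t + (i + 1) by omega] at this

/-- If `g` vanishes (takes the value `1`) below `k`, then its `k`-th derivative at `0` is `g k`. -/
theorem seqD_iterate_zero (k : ℕ) (g : ℕ → P) (h : ∀ j < k, g j = 1) :
    (seqD^[k] g) 0 = g k := by
  induction k generalizing g with
  | zero => rfl
  | succ k ih =>
    rw [Function.iterate_succ_apply, ih]
    · simp [seqD, h k (Nat.lt_succ_self k)]
    · intro j hj
      simp [seqD, h j (by omega), h (j + 1) (by omega)]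

/-- The form of the Hall–Petrescu formula needed here: if the correction terms `a ^ q.choose k`
vanish for all `a ∈ F k`, `k ≥ 2`, then `z ↦ z ^ q` is multiplicative on `F 1`. -/
theorem IsFilt.mul_pow_eq (hF : IsFilt F) {C : ℕ} (hC : F C = ⊥) (q : ℕ)
    (hq : ∀ k, 2 ≤ k → ∀ a ∈ F k, a ^ q.choose k = 1) {x y : P} (hx : x ∈ F 1) (hy : y ∈ F 1) :
    (x * y) ^ q = x ^ q * y ^ q := by
  have hpow : ∀ z ∈ F 1, IsPolySeq_s4 F 0 (fun n => z ^ n) := fun z hz => by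
    simpa using hF.isPolySeq_choose 1 0 z (by simpa using hz)
  -- Remove the Taylor coefficients of `y⁻ⁿ x⁻ⁿ (x y)ⁿ` one at a time; the value at `q` is kept.
  have key : ∀ k, ∃ g : ℕ → P, IsPolySeq_s4 F 0 g ∧ (∀ j < k + 2, g j = 1) ∧
      g q = (y ^ q)⁻¹ * (x ^ q)⁻¹ * (x * y) ^ q := by
    intro k
    induction k with
    | zero =>
      refine ⟨(fun n => y ^ n)⁻¹ * (fun n => x ^ n)⁻¹ * fun n => (x * y) ^ n,
        hF.isPolySeq_mul hC (hF.isPolySeq_mul hC (hpow y hy).inv (hpow x hx).inv)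
          (hpow _ (mul_mem hx hy)), ?_, rfl⟩
      intro j hj
      have : j = 0 ∨ j = 1 := by omega
      rcases this with rfl | rfl
      · simp
      · simp [mul_assoc]
    | succ k ih =>
      obtain ⟨g, hg, h0, hgq⟩ := ih
      have ha : g (k + 2) ∈ F (k + 2) := by
        have := hg.iterate_mem (k + 2) 0
        rwa [seqD_iterate_zero _ _ h0, Nat.zero_add] at this
      refine ⟨g * fun n => (g (k + 2))⁻¹ ^ n.choose (k + 2), hF.isPolySeq_mul hC hg
        (hF.isPolySeq_choose _ _ _ (by simpa using ha)), ?_, ?_⟩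
      · intro j hj
        rcases Nat.lt_succ_iff_lt_or_eq.1 hj with hj' | rfl
        · simp [h0 j hj', Nat.choose_eq_zero_of_lt hj']
        · simp
      · simp only [Pi.mul_apply]
        rw [hq _ (by omega) _ (inv_mem ha), mul_one, hgq]
  obtain ⟨g, -, h0, hgq⟩ := key q
  rw [h0 q (by omega)] at hgq
  have : (x * y) ^ q = x ^ q * y ^ q * ((y ^ q)⁻¹ * (x ^ q)⁻¹ * (x * y) ^ q) := by group
  rw [this, ← hgq, mul_one]

end Poly

/-! ### Equal `p ^ e`-th powers in class less than `p` -/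

section Regular

variable {P : Type*} [Group P] {F : ℕ → Subgroup P}

/-- If `T` is normalised by `⟨X⟩` and contains the commutators of elements of `X`, then `⟨X⟩`
is commutative modulo `T`. -/
theorem commutator_closure_mem {X : Set P} {T : Subgroup P}
    (hT : ∀ z ∈ Subgroup.closure X, ∀ t ∈ T, z * t * z⁻¹ ∈ T)
    (hX : ∀ a ∈ X, ∀ b ∈ X, ⁅a, b⁆ ∈ T) {a b : P}
    (ha : a ∈ Subgroup.closure X) (hb : b ∈ Subgroup.closure X) : ⁅a, b⁆ ∈ T := by
  have step : ∀ w, (∀ a ∈ X, ⁅a, w⁆ ∈ T) → ∀ a ∈ Subgroup.closure X, ⁅a, w⁆ ∈ T := by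
    intro w hw a ha
    induction ha using Subgroup.closure_induction with
    | mem x hx => exact hw x hx
    | one => simp
    | mul x y hx hy ihx ihy =>
      rw [show ⁅x * y, w⁆ = x * ⁅y, w⁆ * x⁻¹ * ⁅x, w⁆ by
        simp only [commutatorElement_def]; group]
      exact mul_mem (hT x hx _ ihy) ihx
    | inv x hx ih =>
      rw [show ⁅x⁻¹, w⁆ = x⁻¹ * ⁅x, w⁆⁻¹ * x⁻¹⁻¹ by
        simp only [commutatorElement_def]; group]
      exact hT _ (inv_mem hx) _ (inv_mem ih)
  refine step b (fun x hx => ?_) a ha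
  rw [← commutatorElement_inv]
  exact inv_mem (step x (fun y hy => hX y hy x hx) b hb)

theorem IsFilt.conj_mem (hF : IsFilt F) {i : ℕ} {z t : P} (hz : z ∈ F 0) (ht : t ∈ F i) :
    z * t * z⁻¹ ∈ F i := by
  have h := hF.comm hz ht
  rw [Nat.zero_add] at h
  have := mul_mem h ht
  rwa [show ⁅z, t⁆ * t = z * t * z⁻¹ by rw [commutatorElement_def]; group] at this

/-- The filtration of the group `⟨y, F 2⟩` induced by `F`, one step shorter than `F`. -/
def filtShift (F : ℕ → Subgroup P) (y : P) (i : ℕ) : Subgroup P :=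
  if i ≤ 1 then Subgroup.closure (insert y (F 2 : Set P)) else F (i + 1)

theorem mem_filtShift_one_self (y : P) : y ∈ filtShift F y 1 := by
  simpa [filtShift] using Subgroup.subset_closure (Set.mem_insert _ _)

theorem le_filtShift_one (y : P) : F 2 ≤ filtShift F y 1 := by
  intro z hz
  simpa [filtShift] using Subgroup.subset_closure (Set.mem_insert_of_mem _ hz)

theorem IsFilt.isFilt_filtShift (hF : IsFilt F) {y : P} (hy : y ∈ F 1) : IsFilt (filtShift F y) := by
  have hle : Subgroup.closure (insert y (F 2 : Set P)) ≤ F 1 := by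
    rw [Subgroup.closure_le]
    rintro z (rfl | hz)
    · exact hy
    · exact hF.anti (by omega) hz
  have h2le : F 2 ≤ Subgroup.closure (insert y (F 2 : Set P)) :=
    fun z hz => Subgroup.subset_closure (Set.mem_insert_of_mem _ hz)
  have hcomm : ∀ {a b}, a ∈ Subgroup.closure (insert y (F 2 : Set P)) →
      b ∈ Subgroup.closure (insert y (F 2 : Set P)) → ⁅a, b⁆ ∈ F 3 := by
    intro a b ha hb
    refine commutator_closure_mem (fun z hz t ht =>
      hF.conj_mem (hF.anti (Nat.zero_le 1) (hle hz)) ht) ?_ ha hb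
    rintro u (rfl | hu) v (rfl | hv)
    · simp
    · exact hF.comm hy hv
    · exact hF.comm hu hy
    · exact hF.anti (by omega) (hF.comm hu hv)
  refine ⟨?_, ?_⟩
  · intro i j hij
    unfold filtShift
    split_ifs with h1 h2 h2
    · exact le_rfl
    · omega
    · exact (hF.anti (by omega)).trans h2le
    · exact hF.anti (by omega)
  · intro i j a b ha hb
    unfold filtShift at ha hb ⊢
    split_ifs at ha hb ⊢ with h1 h2 h3 h3
    all_goals first
      | omega
      | exact h2le (hF.anti (by omega) (hcomm ha hb))
      | exact hF.anti (by omega) (hcomm ha hb)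
      | exact hF.anti (by omega) (hF.comm (hle ha) hb)
      | exact hF.anti (by omega) (hF.comm ha (hle hb))
      | exact hF.anti (by omega) (hF.comm ha hb)

theorem Nat.Prime.pow_dvd_choose_pow {p : ℕ} (hp : p.Prime) (e : ℕ) {k : ℕ} (hk0 : 0 < k)
    (hk : k < p) : p ^ e ∣ (p ^ e).choose k := by
  obtain ⟨k, rfl⟩ : ∃ j, k = j + 1 := ⟨k - 1, by omega⟩
  obtain ⟨n, hn⟩ : ∃ n, p ^ e = n + 1 :=
    Nat.exists_eq_succ_of_ne_zero (pow_ne_zero e hp.ne_zero)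
  have h := Nat.add_one_mul_choose_eq n k
  have hc : Nat.Coprime (p ^ e) (k + 1) :=
    Nat.Coprime.pow_left _ ((Nat.Prime.coprime_iff_not_dvd hp).2
      fun hd => absurd (Nat.le_of_dvd (by omega) hd) (by omega))
  refine hc.dvd_of_dvd_mul_right ?_
  rw [hn, ← h]
  exact Dvd.intro _ rfl

/-- In class less than `p`, elements with equal `p ^ e`-th powers differ by an element of order
dividing `p ^ e`. With `x⁻¹` in place of `x` this includes the fact that elements of order
dividing `p ^ e` are closed under products. -/
theorem IsFilt.inv_mul_pow_eq_one {p : ℕ} (hp : p.Prime) (e c : ℕ) (hc : c ≤ p)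
    (hF : IsFilt F) (hFc : F c = ⊥) {x y : P} (hx : x ∈ F 1) (hy : y ∈ F 1)
    (hxy : x ^ p ^ e = y ^ p ^ e) : (x⁻¹ * y) ^ p ^ e = 1 := by
  induction c generalizing F x y with
  | zero =>
    have h1 : ∀ z ∈ F 1, z = 1 := fun z hz => by
      have := hF.anti (Nat.zero_le 1) hz
      rwa [hFc, Subgroup.mem_bot] at this
    simp [h1 x hx, h1 y hy]
  | succ c ih =>
    by_cases hc2 : c < 2
    · have h2 : ⁅x, y⁆ ∈ F (c + 1) := hF.anti (by omega) (hF.comm hx hy)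
      rw [hFc, Subgroup.mem_bot, commutatorElement_eq_one_iff_commute] at h2
      rw [h2.inv_left.mul_pow, inv_pow, hxy, inv_mul_cancel]
    have ih' : ∀ y ∈ F 1, ∀ u ∈ filtShift F y 1, ∀ v ∈ filtShift F y 1,
        u ^ p ^ e = v ^ p ^ e → (u⁻¹ * v) ^ p ^ e = 1 := fun y hy u hu v hv huv =>
      ih (by omega) (hF.isFilt_filtShift hy) (by simpa [filtShift, show ¬ c ≤ 1 by omega]) hu hv huv
    let T : Subgroup P :=
      { carrier := {t | t ∈ F 2 ∧ t ^ p ^ e = 1}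
        mul_mem' := by
          rintro a b ⟨ha, ha'⟩ ⟨hb, hb'⟩
          refine ⟨mul_mem ha hb, ?_⟩
          have := ih' y hy a⁻¹ (inv_mem (le_filtShift_one y ha)) b (le_filtShift_one y hb)
            (by rw [inv_pow, ha', hb', inv_one])
          rwa [inv_inv] at this
        one_mem' := ⟨one_mem _, one_pow _⟩
        inv_mem' := by
          rintro a ⟨ha, ha'⟩
          exact ⟨inv_mem ha, by rw [inv_pow, ha', inv_one]⟩ }
    have hxyT : ⁅x, y⁆ ∈ T := by
      refine ⟨hF.comm hx hy, ?_⟩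
      have hc1 : x * y * x⁻¹ ∈ filtShift F y 1 := by
        have := mul_mem (le_filtShift_one y (hF.comm hx hy)) (mem_filtShift_one_self (F := F) y)
        rwa [show ⁅x, y⁆ * y = x * y * x⁻¹ by rw [commutatorElement_def]; group] at this
      have := ih' y hy (x * y * x⁻¹)⁻¹ (inv_mem hc1) y⁻¹ (inv_mem (mem_filtShift_one_self y)) (by
        rw [inv_pow, inv_pow, conj_pow, ← hxy, (Commute.refl x).pow_right _ |>.eq,
          mul_inv_cancel_right])
      rwa [inv_inv] at this
    set R := Subgroup.closure ({x, y} : Set P) with hR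
    have hRF : R ≤ F 1 := by
      rw [hR, Subgroup.closure_le]
      rintro z (rfl | rfl)
      · exact hx
      · exact hy
    have hRT : ∀ {a b}, a ∈ R → b ∈ R → ⁅a, b⁆ ∈ T := by
      intro a b ha hb
      refine commutator_closure_mem (fun z hz t ht => ?_) ?_ ha hb
      · exact Subgroup.mem_carrier.1 (show z * t * z⁻¹ ∈ F 2 ∧ (z * t * z⁻¹) ^ p ^ e = 1 from
          ⟨hF.conj_mem (hF.anti (Nat.zero_le 1) (hRF hz)) ht.1, by rw [conj_pow, ht.2]; simp⟩)
      rintro u (rfl | rfl) v (rfl | rfl)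
      · simp
      · exact hxyT
      · rw [← commutatorElement_inv]; exact inv_mem hxyT
      · simp
    -- A filtration of `⟨x, y⟩` all of whose terms of index at least two are torsion.
    let Q : ℕ → Subgroup P := fun i => if i ≤ 1 then R else R ⊓ T ⊓ F i
    have hQR : ∀ i, Q i ≤ R := fun i => by
      by_cases h : i ≤ 1
      · simp [Q, h]
      · simp only [Q, h, if_false]; exact inf_le_left.trans inf_le_left
    have hQF : ∀ i, Q i ≤ F i := fun i => by
      by_cases h : i ≤ 1
      · simp only [Q, h, if_true]; exact hRF.trans (hF.anti h)
      · simp only [Q, h, if_false]; exact inf_le_right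
    have hQ : IsFilt Q := by
      refine ⟨fun i j hij => ?_, fun {i j a b} ha hb => ?_⟩
      · by_cases h : i ≤ 1
        · simpa only [Q, h, if_true] using hQR j
        · have h' : ¬ j ≤ 1 := by omega
          simp only [Q, h, h', if_false]
          exact inf_le_inf_left _ (hF.anti hij)
      · have ha' := hQR _ ha
        have hb' := hQR _ hb
        have h1 : ⁅a, b⁆ ∈ R := by
          rw [commutatorElement_def]
          exact mul_mem (mul_mem (mul_mem ha' hb') (inv_mem ha')) (inv_mem hb')
        by_cases h : i + j ≤ 1
        · simpa only [Q, h, if_true] using h1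
        · simp only [Q, h, if_false]
          exact ⟨⟨h1, hRT ha' hb'⟩, hF.comm (hQF _ ha) (hQF _ hb)⟩
    have hQc : Q (c + 1) = ⊥ := le_bot_iff.1 (hFc ▸ hQF (c + 1))
    have hQ1 : Q 1 = R := by simp [Q]
    have hxR : x ∈ R := Subgroup.subset_closure (by simp)
    have hyR : y ∈ R := Subgroup.subset_closure (by simp)
    have main := hQ.mul_pow_eq hQc (p ^ e) (fun k hk a ha => ?_) (x := x⁻¹) (y := y)
      (hQ1 ▸ inv_mem hxR) (hQ1 ▸ hyR)
    · rw [main, inv_pow, hxy, inv_mul_cancel]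
    · by_cases hkp : k < p
      · obtain ⟨m, hm⟩ := hp.pow_dvd_choose_pow e (by omega) hkp
        simp only [Q, show ¬ k ≤ 1 by omega, if_false] at ha
        rw [hm, pow_mul, ha.1.2.2, one_pow]
      · have := hQ.anti (show c + 1 ≤ k by omega) ha
        rw [hQc, Subgroup.mem_bot] at this
        rw [this, one_pow]

end Regular

/-! ### The series `[M, _i G]` of a relative central extension -/

namespace RelCentralExt

variable {M G : Type*} [Group M] [Group G] {σ : M →* G} {N : Subgroup G} (E : RelCentralExt σ N)

/-- The action of `g`, as an endomorphism of `M`. -/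
def actHom (g : G) : M →* M := MonoidHom.mk' (fun m => E.act m g) fun m n => E.act_mul m n g

theorem cmt_mem {i : ℕ} {m : M} (hm : m ∈ E.iterComm ⊤ i) (g : G) :
    E.cmt m g ∈ E.iterComm ⊤ (i + 1) :=
  Subgroup.subset_closure ⟨m, hm, g, rfl⟩

theorem act_mem {i : ℕ} {m : M} (hm : m ∈ E.iterComm ⊤ i) (g : G) :
    E.act m g ∈ E.iterComm ⊤ i := by
  induction i generalizing m g with
  | zero => exact Subgroup.mem_top _
  | succ i ih =>
    have : E.iterComm ⊤ (i + 1) ≤ (E.iterComm ⊤ (i + 1)).comap (E.actHom g) := by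
      conv_lhs => unfold iterComm commSub
      rw [Subgroup.closure_le]
      rintro _ ⟨n, hn, h, rfl⟩
      have h1 := E.cmt_mem (ih hn g) (g⁻¹ * h * g)
      have h2 : E.cmt (E.act n g) (g⁻¹ * h * g) = E.actHom g (E.cmt n h) := by
        change (E.actHom g n)⁻¹ * E.act (E.act n g) (g⁻¹ * h * g) = E.actHom g (n⁻¹ * E.act n h)
        rw [map_mul, map_inv]
        change _ = _ * E.act (E.act n h) g
        rw [E.act_act, E.act_act]
        congr 2
        group
      rw [h2] at h1
      exact h1
    exact this hm

theorem iterComm_succ_le (i : ℕ) : E.iterComm ⊤ (i + 1) ≤ E.iterComm ⊤ i := by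
  conv_lhs => unfold iterComm commSub
  rw [Subgroup.closure_le]
  rintro _ ⟨n, hn, h, rfl⟩
  exact mul_mem (inv_mem hn) (E.act_mem hn h)

theorem iterComm_antitone : Antitone (E.iterComm ⊤) := antitone_nat_of_succ_le E.iterComm_succ_le

theorem conj_mem {i : ℕ} {m : M} (hm : m ∈ E.iterComm ⊤ i) (z : M) :
    z * m * z⁻¹ ∈ E.iterComm ⊤ i := by
  have := E.act_mem hm (σ z⁻¹)
  rwa [E.act_sigma, inv_inv] at this

/-- `[L i, L j] ≤ L (i + j + 1)` for `L i = [M, _i G]`. -/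
theorem commutator_mem {i j : ℕ} {a b : M} (ha : a ∈ E.iterComm ⊤ i) (hb : b ∈ E.iterComm ⊤ j) :
    ⁅a, b⁆ ∈ E.iterComm ⊤ (i + j + 1) := by
  induction j generalizing i a b with
  | zero =>
    have h := E.cmt_mem (inv_mem ha) (σ b⁻¹)
    rw [cmt, E.act_sigma] at h
    rwa [show a⁻¹⁻¹ * (b⁻¹⁻¹ * a⁻¹ * b⁻¹) = ⁅a, b⁆ by rw [commutatorElement_def]; group] at h
  | succ j ih =>
    change b ∈ Subgroup.closure _ at hb
    induction hb using Subgroup.closure_induction with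
    | one => simp
    | mul x y _ _ ihx ihy =>
      rw [show ⁅a, x * y⁆ = ⁅a, x⁆ * (x * ⁅a, y⁆ * x⁻¹) by
        simp only [commutatorElement_def]; group]
      exact mul_mem ihx (E.conj_mem ihy x)
    | inv x _ ihx =>
      rw [show ⁅a, x⁻¹⁆ = x⁻¹ * ⁅a, x⁆⁻¹ * x⁻¹⁻¹ by
        simp only [commutatorElement_def]; group]
      exact E.conj_mem (inv_mem ihx) _
    | mem x hx =>
      obtain ⟨m, hm, g, rfl⟩ := hx
      -- Compare `u = ⁅m, a⁆` with its image `⁅m ^ g, a ^ g⁆` under `g`: both `[u, g]` and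
      -- `⁅m ^ g, [a, g]⁆` lie in `L (i + j + 2)`.
      have hu : ⁅m, a⁆ ∈ E.iterComm ⊤ (i + j + 1) := by
        rw [← commutatorElement_inv]; exact inv_mem (ih ha hm)
      have h1 : E.cmt ⁅m, a⁆ g ∈ E.iterComm ⊤ (i + (j + 1) + 1) := E.cmt_mem hu g
      have h2 : ⁅E.act m g, E.cmt a g⁆ ∈ E.iterComm ⊤ (i + (j + 1) + 1) := by
        rw [← commutatorElement_inv]
        have := inv_mem (ih (E.cmt_mem ha g) (E.act_mem hm g))
        rwa [show i + 1 + j + 1 = i + (j + 1) + 1 by omega] at this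
      have h3 := E.conj_mem (E.conj_mem (mul_mem (E.conj_mem h2 a) (inv_mem h1)) ⁅m, a⁆) m⁻¹
      have h4 : E.act ⁅m, a⁆ g = ⁅E.act m g, E.act a g⁆ := map_commutatorElement (E.actHom g) m a
      refine (congrArg (· ∈ E.iterComm ⊤ (i + (j + 1) + 1)) ?_).mp h3
      rw [show E.cmt ⁅m, a⁆ g = ⁅m, a⁆⁻¹ * ⁅E.act m g, E.act a g⁆ from congrArg _ h4]
      simp only [cmt, commutatorElement_def]
      group

theorem sigma_mem {i : ℕ} {m : M} (hm : m ∈ E.iterComm ⊤ i) : σ m ∈ iterCommG N i := by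
  induction i generalizing m with
  | zero => exact E.range_eq.le ⟨m, rfl⟩
  | succ i ih =>
    have : E.iterComm ⊤ (i + 1) ≤ (iterCommG N (i + 1)).comap σ := by
      conv_lhs => unfold iterComm commSub
      rw [Subgroup.closure_le]
      rintro _ ⟨n, hn, h, rfl⟩
      have h1 : ⁅(σ n)⁻¹, h⁻¹⁆ ∈ iterCommG N (i + 1) :=
        Subgroup.commutator_mem_commutator (inv_mem (ih hn)) (Subgroup.mem_top _)
      change σ (E.cmt n h) ∈ iterCommG N (i + 1)
      rw [cmt, map_mul, map_inv, E.sigma_act]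
      rwa [show (σ n)⁻¹ * (h⁻¹ * σ n * h) = ⁅(σ n)⁻¹, h⁻¹⁆ by
        rw [commutatorElement_def]; group]
    exact this hm

theorem iterComm_succ_eq_bot {k : ℕ} (h : iterCommG N k = ⊥) : E.iterComm ⊤ (k + 1) = ⊥ := by
  rw [eq_bot_iff]
  conv_lhs => unfold iterComm commSub
  rw [Subgroup.closure_le]
  rintro _ ⟨n, hn, g, rfl⟩
  have h1 := E.sigma_mem hn
  rw [h, Subgroup.mem_bot] at h1
  change n⁻¹ * E.act n g = 1
  rw [E.ker_act n h1 g, inv_mul_cancel]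

/-- The series `[M, _i G]`, re-indexed so that the terms of index `0` and `1` are both `M`. -/
theorem isFilt : IsFilt fun i => E.iterComm ⊤ (i - 1) :=
  ⟨fun _ _ hij => E.iterComm_antitone (by omega),
    fun ha hb => E.iterComm_antitone (by omega) (E.commutator_mem ha hb)⟩

end RelCentralExt

/-- Corollary 2.9: let `(G, N)` be a pair of finite `p`-groups of class at most `p - 1`
(i.e. `[N, _{p-1} G] = 1`), where `N` has exponent `p^e` and admits a complement `K`
in `G`, and let `σ : N* → G` be a relative central extension of `(G, N)` with
`ker σ ≤ [N*, G]` (e.g. a covering pair, whose kernel is `M(G, N)`). Then every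
element of `ker σ` has order dividing `p^e = exp N`. -/
theorem stmt_4 {G : Type*} [Group G] [Finite G] (N : Subgroup G) (hN : N.Normal)
    (p e : ℕ) (hp : p.Prime) (he : 0 < e)
    (hG : IsPGroup p G)
    (hnilp : iterCommG N (p - 1) = ⊥)
    (hexp : Monoid.exponent ↥N = p ^ e)
    (K : Subgroup G) (hdisj : N ⊓ K = ⊥)
    (hprod : ∀ g : G, ∃ n ∈ N, ∃ x ∈ K, g = n * x)
    {Nstar : Type*} [Group Nstar] (σ : Nstar →* G) (E : RelCentralExt σ N)
    (hker : σ.ker ≤ E.commSub ⊤) :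
    ∀ a ∈ σ.ker, a ^ p ^ e = 1 := by
  have hFm : ∀ m : Nstar, ∀ x ∈ filtShift (fun i => E.iterComm ⊤ (i - 1)) m 1,
      ∀ y ∈ filtShift (fun i => E.iterComm ⊤ (i - 1)) m 1,
      x ^ p ^ e = y ^ p ^ e → (x⁻¹ * y) ^ p ^ e = 1 := by
    intro m x hx y hy hxy
    refine (E.isFilt.isFilt_filtShift (y := m) (Subgroup.mem_top m)).inv_mul_pow_eq_one hp e p le_rfl ?_
      hx hy hxy
    have h := E.iterComm_succ_eq_bot hnilp
    rw [Nat.sub_add_cancel hp.one_le] at h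
    simpa [filtShift, hp.one_lt.not_ge] using h
  have hle : ∀ m : Nstar, E.commSub ⊤ ≤ filtShift (fun i => E.iterComm ⊤ (i - 1)) m 1 :=
    fun m => le_filtShift_one (F := fun i => E.iterComm ⊤ (i - 1)) m
  have hgen : ∀ m g, E.cmt m g ^ p ^ e = 1 := by
    intro m g
    have hm := mem_filtShift_one_self (F := fun i => E.iterComm ⊤ (i - 1)) m
    have hcm : E.cmt m g ∈ E.commSub ⊤ := Subgroup.subset_closure ⟨m, Subgroup.mem_top _, g, rfl⟩
    refine hFm m m hm (E.act m g) ?_ ?_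
    · have := mul_mem hm (hle m hcm)
      rwa [RelCentralExt.cmt, mul_inv_cancel_left] at this
    · have hk : m ^ p ^ e ∈ σ.ker := by
        have hmN : σ m ∈ N := E.range_eq.le ⟨m, rfl⟩
        have := Monoid.pow_exponent_eq_one (⟨σ m, hmN⟩ : N)
        rw [hexp] at this
        rw [MonoidHom.mem_ker, map_pow]
        exact congrArg Subtype.val this
      exact (E.ker_act _ hk g).symm.trans (map_pow (E.actHom g) m _)
  intro a ha
  refine Subgroup.closure_induction (p := fun z _ => z ^ p ^ e = 1) ?_ (one_pow _) ?_ ?_ (hker ha)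
  · rintro _ ⟨m, -, g, rfl⟩
    exact hgen m g
  · intro x y hx hy ihx ihy
    have := hFm 1 x⁻¹ (inv_mem (hle 1 hx)) y (hle 1 hy) (by rw [inv_pow, ihx, ihy, inv_one])
    rwa [inv_inv] at this
  · intro x _ ihx
    rw [inv_pow, ihx, inv_one]
end

section
/- Let p be an odd prime, let (G,N) be a pair of finite p-groups, and let σ : N* → G be a relative central extension of (G,N). Suppose that [[N*,G],G,G] = 1 (i.e. [N*, _3 G] = 1) and 𝕌₁([N*,G]) = 1. Then 𝕌₁(N*) ≤ Z(N*,G); equivalently, (a^p)^b = a^p for all a ∈ N* and b ∈ G. (This is the claim established in the base step of the proof of Lemma 3.9(i).) -/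
/-- The collection formula for `(a c)^n` when the commutator `d` of `c` and `a` is central. -/
theorem mul_pow_of_comm {M : Type*} [Group M] {a c d : M} (h : c * a = a * c * d)
    (hda : Commute d a) (hdc : Commute d c) (n : ℕ) :
    (a * c) ^ n = a ^ n * c ^ n * d ^ n.choose 2 := by
  have hc : ∀ n : ℕ, c ^ n * a = a * c ^ n * d ^ n := by
    intro n
    induction n with
    | zero => simp
    | succ n ih =>
      calc c ^ (n + 1) * a = c ^ n * (c * a) := by rw [pow_succ, mul_assoc]
        _ = (c ^ n * a) * c * d := by rw [h]; simp only [mul_assoc]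
        _ = a * c ^ n * (d ^ n * c) * d := by rw [ih]; simp only [mul_assoc]
        _ = a * c ^ (n + 1) * d ^ (n + 1) := by
          rw [(hdc.pow_left n).eq, pow_succ c, pow_succ d]; simp only [mul_assoc]
  induction n with
  | zero => simp
  | succ n ih =>
    have hch : (n + 1).choose 2 = n + n.choose 2 := by
      rw [Nat.choose_succ_succ' n 1, Nat.choose_one_right]
    have hd := (hda.mul_right hdc).pow_left (n.choose 2)
    calc (a * c) ^ (n + 1) = a ^ n * c ^ n * (d ^ n.choose 2 * (a * c)) := by
          rw [pow_succ, ih, mul_assoc]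
      _ = a ^ n * (c ^ n * a) * c * d ^ n.choose 2 := by rw [hd.eq]; simp only [mul_assoc]
      _ = a ^ n * a * c ^ n * (d ^ n * c) * d ^ n.choose 2 := by rw [hc]; simp only [mul_assoc]
      _ = a ^ (n + 1) * c ^ (n + 1) * d ^ (n + 1).choose 2 := by
          rw [(hdc.pow_left n).eq, hch, pow_succ a n, pow_succ c n, pow_add d]; simp only [mul_assoc]

/-- The base step claim in the proof of Lemma 3.9(i): let `p` be an odd prime, `(G, N)`
a pair of finite `p`-groups, `σ : N* → G` a relative central extension of `(G, N)` with
`[N*, _3 G] = 1` and `𝕌₁([N*, G]) = 1`. Then `𝕌₁(N*) ≤ Z(N*, G)`; equivalently,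
`(a^p)^b = a^p` for all `a ∈ N*` and `b ∈ G`. -/
theorem stmt_12 {G : Type*} [Group G] [Finite G] (p : ℕ) (hp : p.Prime) (hodd : Odd p)
    (hG : IsPGroup p G) (N : Subgroup G) (hN : N.Normal)
    {Nstar : Type*} [Group Nstar] (σ : Nstar →* G) (E : RelCentralExt σ N)
    (h3 : E.iterComm ⊤ 3 = ⊥) (h1 : pPow p 1 (E.commSub ⊤) = ⊥) :
    ∀ (a : Nstar) (b : G), E.act (a ^ p) b = a ^ p := by
  intro a b
  have hmem : ∀ (K : Subgroup Nstar) (m : Nstar), m ∈ K → ∀ g, E.cmt m g ∈ E.commSub K :=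
    fun K m hm g => Subgroup.subset_closure ⟨m, hm, g, rfl⟩
  have hpow : ∀ x ∈ E.commSub ⊤, x ^ p = 1 := by
    intro x hx
    have : x ^ p ∈ pPow p 1 (E.commSub ⊤) := Subgroup.subset_closure ⟨x, hx, by rw [pow_one]⟩
    rwa [h1, Subgroup.mem_bot] at this
  have hact : E.act (a ^ p) b = E.act a b ^ p :=
    map_pow (MonoidHom.mk' (fun m => E.act m b) fun m n => E.act_mul m n b) a p
  set c := E.cmt a b with hc
  have hab : E.act a b = a * c := by rw [hc, RelCentralExt.cmt, mul_inv_cancel_left]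
  set d := E.cmt c (σ a) with hd
  have hcK : c ∈ E.commSub ⊤ := hmem ⊤ a trivial b
  have hfix : ∀ g, E.act d g = d := by
    intro g
    have h : E.cmt d g ∈ E.iterComm ⊤ 3 := hmem _ d (hmem _ c hcK (σ a)) g
    rw [h3, Subgroup.mem_bot, RelCentralExt.cmt] at h
    exact (inv_mul_eq_one.mp h).symm
  have hcomm : ∀ x, Commute d x := by
    intro x
    have h := hfix (σ x)
    rw [E.act_sigma, mul_assoc, inv_mul_eq_iff_eq_mul] at h
    exact h
  have hca : c * a = a * c * d := by
    rw [hd, RelCentralExt.cmt, E.act_sigma]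
    group
  have hp2 : p ∣ p.choose 2 := by
    refine hp.dvd_choose_self two_ne_zero (lt_of_le_of_ne hp.two_le ?_)
    rintro rfl
    exact absurd hodd (by decide)
  obtain ⟨k, hk⟩ := hp2
  rw [hact, hab, mul_pow_of_comm hca (hcomm a) (hcomm c), hpow c hcK, hk, pow_mul,
    hpow d (hmem ⊤ c trivial (σ a)), one_pow, mul_one, mul_one]
end
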